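/- Recovering section coefficients: for all 𝔰, 𝔱, 𝔤 ∈ IPs, the set {(A,A') : A ∪ A' = ⋃𝔤, std(𝔤(A)) ≥ 𝔰, std(𝔤(A')) ≥ 𝔱, 𝔤(A)_𝔰 ⋎ 𝔤(A')_𝔱 = 𝔤} equals the set {(A,A') : A ∪ A' = ⋃𝔤, and there exist unique 𝓘 ∈ IP(A), 𝓘' ∈ IP(A') with std(𝓘)=𝔰, std(𝓘')=𝔱, 𝓘 ⋎ 𝓘' = 𝔤}; in particular its cardinality equals the quasi-shuffle section coefficient c(𝔰,𝔱;𝔤). -/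

import Mathlib

/-!
The point is rigidity of standardization: on a finite set `A` the map `stdMap A` is injective, so
an interval partition of `A` is determined by its standardization (`stdIP_inj`). Hence existence
of a pair `(𝓘, 𝓘')` with prescribed ground sets and standardizations is the same as unique
existence, and `refineTo` returns any partition with the required properties
(`refineTo_eq`).

It remains to match the order condition with existence. If `𝔰 ≤ std(𝔤(A))`, pulling the blocks of
`𝔰` back along `stdMap A` gives an interval partition below `𝔤(A)` (`exists_refinement`); the
pulled back blocks are intervals because each lies inside one block of `𝔤(A)`, which has no gaps.
Conversely, if `𝓘 ⋎ 𝓘' = 𝔤`, every block of `𝓘` lies in one block of `𝔤` and, having no gaps, in one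
clique of `A`, so `𝓘 ≤ 𝔤(A)` (`IPle_restrictIP`), and standardization is monotone
(`IPle_stdIP`).
-/

open Set

/-- A block: a nonempty interval of consecutive positive integers. -/
def IsIntervalBlock (B : Set ℕ) : Prop :=
  B.Nonempty ∧ (∀ x ∈ B, 1 ≤ x) ∧
    ∀ x ∈ B, ∀ z ∈ B, ∀ y : ℕ, x ≤ y → y ≤ z → y ∈ B

/-- An interval partition of a finite subset of the positive integers:
a family of pairwise disjoint nonempty intervals with finite ground set. -/
def IsIntervalPartition (P : Set (Set ℕ)) : Prop :=
  (⋃₀ P).Finite ∧ (∀ B ∈ P, IsIntervalBlock B) ∧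
    ∀ B ∈ P, ∀ C ∈ P, B ≠ C → B ∩ C = ∅

/-- An interval partition with prescribed ground set `A`. -/
def IsIntervalPartitionOf (P : Set (Set ℕ)) (A : Set ℕ) : Prop :=
  IsIntervalPartition P ∧ ⋃₀ P = A

/-- Standardized interval partitions: interval partitions of `{1, …, n}`. -/
def IsStdIP (P : Set (Set ℕ)) : Prop :=
  IsIntervalPartition P ∧ ∃ n : ℕ, ⋃₀ P = Set.Icc 1 n

/-- Refinement order: same ground set, and every block of `P`
is contained in some block of `Q`. -/
def IPle (P Q : Set (Set ℕ)) : Prop :=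
  ⋃₀ P = ⋃₀ Q ∧ ∀ B ∈ P, ∃ C ∈ Q, B ⊆ C

/-- The equivalence relation on blocks generated by having nonempty
intersection (among members of `S`). -/
def glueRel (S : Set (Set ℕ)) : Set ℕ → Set ℕ → Prop :=
  Relation.EqvGen fun X Y => X ∈ S ∧ Y ∈ S ∧ (X ∩ Y).Nonempty

/-- Gluing of two interval partitions. -/
def glue (P Q : Set (Set ℕ)) : Set (Set ℕ) :=
  (fun T => ⋃₀ {X ∈ P ∪ Q | glueRel (P ∪ Q) T X}) '' (P ∪ Q)

/-- The relation on `A` generated by `y = x + 1`. -/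
def cliqueRel (A : Set ℕ) : ℕ → ℕ → Prop :=
  Relation.EqvGen fun x y => x ∈ A ∧ y ∈ A ∧ y = x + 1

/-- `cliques A`: the coarsest interval partition of `A`. -/
def cliques (A : Set ℕ) : Set (Set ℕ) :=
  (fun x => {y ∈ A | cliqueRel A x y}) '' A

/-- `𝓘(A)`: the interval partition of `A ∩ ⋃₀ 𝓘` induced by `𝓘`. -/
def restrictIP (P : Set (Set ℕ)) (A : Set ℕ) : Set (Set ℕ) :=
  {Z | Z ≠ ∅ ∧ ∃ B ∈ P, ∃ c ∈ cliques A, Z = B ∩ c}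

/-- The unique order preserving map sending a finite `S ⊆ ℕ` onto `{1,…,|S|}`. -/
noncomputable def stdMap (S : Set ℕ) (x : ℕ) : ℕ := {y ∈ S | y ≤ x}.ncard

/-- Standardization of an interval partition. -/
noncomputable def stdIP (P : Set (Set ℕ)) : Set (Set ℕ) :=
  (fun B => stdMap (⋃₀ P) '' B) '' P

/-- Shifting all blocks of a partition up by `m`. -/
def shiftIP (m : ℕ) (P : Set (Set ℕ)) : Set (Set ℕ) :=
  (fun B => (fun x => x + m) '' B) '' P

/-- Concatenation of standardized interval partitions. -/
noncomputable def concatIP (P Q : Set (Set ℕ)) : Set (Set ℕ) :=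
  P ∪ shiftIP (⋃₀ P).ncard Q

/-- Quasi-shuffle section coefficient `c(𝔰,𝔱;𝔤)`. -/
noncomputable def secCoeff (s t g : Set (Set ℕ)) : ℕ :=
  {p : Set ℕ × Set ℕ | p.1 ∪ p.2 = ⋃₀ g ∧
      ∃ I I' : Set (Set ℕ), IsIntervalPartitionOf I p.1 ∧ IsIntervalPartitionOf I' p.2 ∧
        stdIP I = s ∧ stdIP I' = t ∧ glue I I' = g}.ncard

/-- The signature pairing `⟨IPC(𝔏), 𝔰⟩`. -/
noncomputable def IPC (L s : Set (Set ℕ)) : ℕ :=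
  {A : Set ℕ | A ⊆ ⋃₀ L ∧ IPle s (stdIP (restrictIP L A))}.ncard

open Classical in
/-- The unique refinement `𝓘_𝔰` of `𝓘` with standardization `𝔰` (junk value otherwise). -/
noncomputable def refineTo (P s : Set (Set ℕ)) : Set (Set ℕ) :=
  if h : ∃ Q : Set (Set ℕ), IsIntervalPartition Q ∧ IPle Q P ∧ stdIP Q = s then h.choose
  else ∅

/-- The concatenation of single blocks of the sizes listed in `l`. -/
noncomputable def concatList (l : List ℕ) : Set (Set ℕ) :=
  l.foldl (fun acc m => concatIP acc {Set.Icc 1 m}) ∅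

/-- A permutation of `{1,…,n}`, encoded as a function on `ℕ` fixing everything else. -/
def IsPermOf (n : ℕ) (σ : ℕ → ℕ) : Prop :=
  Set.BijOn σ (Set.Icc 1 n) (Set.Icc 1 n) ∧ ∀ x : ℕ, x ∉ Set.Icc 1 n → σ x = x

open Classical in
/-- The `i`-th smallest element of `A` (junk value otherwise). -/
noncomputable def nthElt (A : Set ℕ) (i : ℕ) : ℕ :=
  if h : ∃ x ∈ A, stdMap A x = i then h.choose else 0

/-- Standardization `st(Λ|_A)` of `Λ` restricted to `A`: the permutation of `{1,…,|A|}`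
recording the relative order of the values of `Λ` on `A`. -/
noncomputable def stdRestrict (lam : ℕ → ℕ) (A : Set ℕ) : ℕ → ℕ := fun i =>
  if 1 ≤ i ∧ i ≤ A.ncard then {b ∈ A | lam b ≤ lam (nthElt A i)}.ncard else i

/-- Concatenation `σ ⊡ τ` of permutations of `{1,…,m}` and `{1,…,n}`. -/
def permConcat (m n : ℕ) (σ τ : ℕ → ℕ) : ℕ → ℕ := fun i =>
  if 1 ≤ i ∧ i ≤ m then σ i
  else if m + 1 ≤ i ∧ i ≤ m + n then τ (i - m) + m
  else i

/-- A vincular pattern: a standardized interval partition of `{1,…,n}`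
together with a permutation of `{1,…,n}`. -/
def IsVincular (p : Set (Set ℕ) × (ℕ → ℕ)) : Prop :=
  ∃ n : ℕ, IsIntervalPartitionOf p.1 (Set.Icc 1 n) ∧ IsPermOf n p.2

/-- Concatenation of vincular patterns. -/
noncomputable def vincConcat (p q : Set (Set ℕ) × (ℕ → ℕ)) : Set (Set ℕ) × (ℕ → ℕ) :=
  (concatIP p.1 q.1, permConcat (⋃₀ p.1).ncard (⋃₀ q.1).ncard p.2 q.2)

/-- Vincular section coefficient `C((𝔰,σ),(𝔱,τ);(𝔤,γ))`. -/
noncomputable def vincCoeff (p q r : Set (Set ℕ) × (ℕ → ℕ)) : ℕ :=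
  {AB : Set ℕ × Set ℕ | AB.1 ∪ AB.2 = ⋃₀ r.1 ∧
      (∃ I I' : Set (Set ℕ), IsIntervalPartitionOf I AB.1 ∧ IsIntervalPartitionOf I' AB.2 ∧
        stdIP I = p.1 ∧ stdIP I' = q.1 ∧ glue I I' = r.1) ∧
      stdRestrict r.2 AB.1 = p.2 ∧ stdRestrict r.2 AB.2 = q.2}.ncard

/-- Vincular signature pairing `⟨GPC(𝔏,Λ), (𝔰,σ)⟩`. -/
noncomputable def GPC (L : Set (Set ℕ)) (lam : ℕ → ℕ) (p : Set (Set ℕ) × (ℕ → ℕ)) : ℕ :=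
  {A : Set ℕ | A ⊆ ⋃₀ L ∧ IPle p.1 (stdIP (restrictIP L A)) ∧ stdRestrict lam A = p.2}.ncard

/-- The set of covering pairs `(A, A')` of the ground set of `g` whose restricted
and refined partitions glue back to `g`. -/
noncomputable def set14 (s t g : Set (Set ℕ)) : Set (Set ℕ × Set ℕ) :=
  {p | p.1 ∪ p.2 = ⋃₀ g ∧
    IPle s (stdIP (restrictIP g p.1)) ∧ IPle t (stdIP (restrictIP g p.2)) ∧
    glue (refineTo (restrictIP g p.1) s) (refineTo (restrictIP g p.2) t) = g}

/-! ### Standardization -/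

theorem stdMap_mono {A : Set ℕ} (hA : A.Finite) : Monotone (stdMap A) := fun _ _ hxy =>
  Set.ncard_le_ncard (fun _ hz => ⟨hz.1, hz.2.trans hxy⟩) (hA.subset fun _ hz => hz.1)

theorem stdMap_strictMonoOn {A : Set ℕ} (hA : A.Finite) : StrictMonoOn (stdMap A) A := by
  intro x _ y hy hxy
  refine Set.ncard_lt_ncard ⟨fun z hz => ⟨hz.1, hz.2.trans hxy.le⟩, fun h => ?_⟩
    (hA.subset fun _ hz => hz.1)
  exact absurd (h ⟨hy, le_rfl⟩).2 (not_le.mpr hxy)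

theorem sUnion_stdIP (P : Set (Set ℕ)) : ⋃₀ stdIP P = stdMap (⋃₀ P) '' ⋃₀ P := by
  rw [stdIP, Set.sUnion_image, Set.image_sUnion, Set.sUnion_image]

theorem stdIP_subset {P Q : Set (Set ℕ)} (hfin : (⋃₀ P).Finite) (hU : ⋃₀ P = ⋃₀ Q)
    (h : stdIP P = stdIP Q) : P ⊆ Q := by
  intro B hB
  have hmem : stdMap (⋃₀ P) '' B ∈ stdIP Q := h ▸ Set.mem_image_of_mem _ hB
  obtain ⟨C, hC, hCB⟩ := hmem
  have hCB' : stdMap (⋃₀ P) '' C = stdMap (⋃₀ P) '' B := by rw [hU] at hCB ⊢; exact hCB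
  have hCP : C ⊆ ⋃₀ P := hU ▸ Set.subset_sUnion_of_mem hC
  have : C = B := ((stdMap_strictMonoOn hfin).injOn.image_eq_image_iff hCP
    (Set.subset_sUnion_of_mem hB)).1 hCB'
  exact this ▸ hC

/-- An interval partition of a finite set is determined by its standardization. -/
theorem stdIP_inj {P Q : Set (Set ℕ)} {A : Set ℕ} (hP : IsIntervalPartitionOf P A)
    (hQ : IsIntervalPartitionOf Q A) (h : stdIP P = stdIP Q) : P = Q :=
  Set.Subset.antisymm (stdIP_subset hP.1.1 (hP.2.trans hQ.2.symm) h)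
    (stdIP_subset hQ.1.1 (hQ.2.trans hP.2.symm) h.symm)

theorem IPle_stdIP {P Q : Set (Set ℕ)} (h : IPle P Q) : IPle (stdIP P) (stdIP Q) := by
  refine ⟨by rw [sUnion_stdIP, sUnion_stdIP, h.1], ?_⟩
  rintro _ ⟨B, hB, rfl⟩
  obtain ⟨C, hC, hBC⟩ := h.2 B hB
  refine ⟨_, ⟨C, hC, rfl⟩, ?_⟩
  simp only [h.1]
  exact Set.image_mono hBC

/-! ### Cliques and restriction -/

theorem cliqueRel_interval {A : Set ℕ} {x z : ℕ} (hxz : x ≤ z)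
    (h : ∀ y, x ≤ y → y ≤ z → y ∈ A) : cliqueRel A x z := by
  induction z, hxz using Nat.le_induction with
  | base => exact Relation.EqvGen.refl _
  | succ z hxz ih =>
    exact (ih fun y h1 h2 => h y h1 (by omega)).trans _ _ _
      (Relation.EqvGen.rel _ _ ⟨h z hxz (by omega), h (z + 1) (by omega) le_rfl, rfl⟩)

/-- Cliques have no gaps. The statement is symmetric in `x` and `z` so that it passes through the
equivalence closure. -/
theorem cliqueRel_between {A : Set ℕ} {x z : ℕ} (h : cliqueRel A x z) (hx : x ∈ A) (hz : z ∈ A)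
    (y : ℕ) (h1 : min x z ≤ y) (h2 : y ≤ max x z) : y ∈ A := by
  -- The endpoints lie in `A` automatically unless they coincide, whence the disjunction.
  have key : ∀ a b, cliqueRel A a b → a = b ∨ (a ∈ A ∧ b ∈ A ∧
      ∀ y, min a b ≤ y → y ≤ max a b → y ∈ A) := by
    intro a b hab
    induction hab with
    | rel a b h =>
      obtain ⟨ha, hb, rfl⟩ := h
      refine Or.inr ⟨ha, hb, fun y h1 h2 => ?_⟩
      have : y = a ∨ y = a + 1 := by omega
      rcases this with rfl | rfl <;> assumption
    | refl a => exact Or.inl rfl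
    | symm a b _ ih =>
      rcases ih with rfl | ⟨ha, hb, ih⟩
      · exact Or.inl rfl
      · exact Or.inr ⟨hb, ha, fun y h1 h2 => ih y (by omega) (by omega)⟩
    | trans a b c _ _ ih1 ih2 =>
      rcases ih1 with rfl | ⟨ha, hb, ih1⟩
      · exact ih2
      rcases ih2 with rfl | ⟨_, hc, ih2⟩
      · exact Or.inr ⟨ha, hb, ih1⟩
      refine Or.inr ⟨ha, hc, fun y h1 h2 => ?_⟩
      by_cases hy : min a b ≤ y ∧ y ≤ max a b
      · exact ih1 y hy.1 hy.2
      · exact ih2 y (by omega) (by omega)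
  rcases key x z h with rfl | ⟨_, _, h⟩
  · have : y = x := by omega
    exact this ▸ hx
  · exact h y h1 h2

theorem sUnion_restrictIP {g : Set (Set ℕ)} {A : Set ℕ} (hA : A ⊆ ⋃₀ g) :
    ⋃₀ restrictIP g A = A := by
  ext x
  constructor
  · rintro ⟨_, ⟨_, B, _, _, ⟨a, _, rfl⟩, rfl⟩, hx⟩
    exact hx.2.1
  · intro hx
    obtain ⟨B, hB, hxB⟩ := hA hx
    have hmem : x ∈ B ∩ {y ∈ A | cliqueRel A x y} := ⟨hxB, hx, Relation.EqvGen.refl _⟩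
    exact ⟨_, ⟨Set.Nonempty.ne_empty ⟨x, hmem⟩, B, hB, _, ⟨x, hx, rfl⟩, rfl⟩, hmem⟩

theorem restrictIP_convex {g : Set (Set ℕ)} {A C : Set ℕ} (hg : IsIntervalPartition g)
    (hC : C ∈ restrictIP g A) {x y z : ℕ} (hx : x ∈ C) (hz : z ∈ C) (hxy : x ≤ y) (hyz : y ≤ z) :
    y ∈ C := by
  obtain ⟨_, B, hB, _, ⟨a, _, rfl⟩, rfl⟩ := hC
  have hxz : cliqueRel A x z := (hx.2.2.symm _ _).trans _ _ _ hz.2.2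
  have hA : ∀ w, x ≤ w → w ≤ z → w ∈ A := fun w h1 h2 =>
    cliqueRel_between hxz hx.2.1 hz.2.1 w (by omega) (by omega)
  exact ⟨(hg.2.1 B hB).2.2 x hx.1 z hz.1 y hxy hyz, hA y hxy hyz,
    hx.2.2.trans _ _ _ (cliqueRel_interval hxy fun w h1 h2 => hA w h1 (h2.trans hyz))⟩

/-- A partition of `A` each of whose blocks lies in a block of `g` refines `g(A)`. -/
theorem IPle_restrictIP {g P : Set (Set ℕ)} {A : Set ℕ} (hP : IsIntervalPartitionOf P A)
    (h : ∀ X ∈ P, ∃ B ∈ g, X ⊆ B) : IPle P (restrictIP g A) := by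
  have hA : A ⊆ ⋃₀ g := by
    rw [← hP.2]
    rintro x ⟨X, hX, hx⟩
    obtain ⟨B, hB, hXB⟩ := h X hX
    exact ⟨B, hB, hXB hx⟩
  refine ⟨hP.2.trans (sUnion_restrictIP hA).symm, fun X hX => ?_⟩
  obtain ⟨B, hB, hXB⟩ := h X hX
  obtain ⟨⟨x, hx⟩, _, hconv⟩ := hP.1.2.1 X hX
  have hXA : X ⊆ A := hP.2 ▸ Set.subset_sUnion_of_mem hX
  have hsub : X ⊆ B ∩ {y ∈ A | cliqueRel A x y} := by
    refine fun y hy => ⟨hXB hy, hXA hy, ?_⟩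
    rcases le_total x y with hxy | hxy
    · exact cliqueRel_interval hxy fun w h1 h2 => hXA (hconv x hx y hy w h1 h2)
    · exact (cliqueRel_interval hxy fun w h1 h2 => hXA (hconv y hy x hx w h1 h2)).symm _ _
  exact ⟨_, ⟨Set.Nonempty.ne_empty ⟨x, hsub hx⟩, B, hB, _, ⟨x, hXA hx, rfl⟩, rfl⟩, hsub⟩

theorem subset_glue {P Q : Set (Set ℕ)} {X : Set ℕ} (hX : X ∈ P ∪ Q) :
    ∃ B ∈ glue P Q, X ⊆ B :=
  ⟨_, ⟨X, hX, rfl⟩, Set.subset_sUnion_of_mem ⟨hX, Relation.EqvGen.refl _⟩⟩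

/-! ### The refinement with prescribed standardization -/

/-- Existence of `g(A)_s`: its blocks are the preimages of the blocks of `s` under the bijection
from `A` to `{1, …, |A|}`. -/
theorem exists_refinement {s g : Set (Set ℕ)} {A : Set ℕ} (hs : IsStdIP s) (hg : IsStdIP g)
    (hA : A ⊆ ⋃₀ g) (h : IPle s (stdIP (restrictIP g A))) :
    ∃ Q, IsIntervalPartition Q ∧ IPle Q (restrictIP g A) ∧ stdIP Q = s := by
  have hfin : A.Finite := hg.1.1.subset hA
  have hR := sUnion_restrictIP hA
  have hU : ⋃₀ s = stdMap A '' A := by rw [h.1, sUnion_stdIP, hR]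
  have hinj := (stdMap_strictMonoOn hfin).injOn
  set Q : Set (Set ℕ) := (fun B => A ∩ stdMap A ⁻¹' B) '' s with hQ
  have hQU : ⋃₀ Q = A := by
    ext x
    constructor
    · rintro ⟨_, ⟨B, _, rfl⟩, hx⟩
      exact hx.1
    · intro hx
      obtain ⟨B, hB, hxB⟩ : stdMap A x ∈ ⋃₀ s := hU ▸ Set.mem_image_of_mem _ hx
      exact ⟨_, ⟨B, hB, rfl⟩, hx, hxB⟩
  have himg : ∀ B ∈ s, stdMap A '' (A ∩ stdMap A ⁻¹' B) = B := by
    intro B hB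
    rw [Set.image_inter_preimage, ← hU]
    exact Set.inter_eq_right.2 (Set.subset_sUnion_of_mem hB)
  have hsub : ∀ B ∈ s, ∃ C ∈ restrictIP g A, A ∩ stdMap A ⁻¹' B ⊆ C := by
    intro B hB
    obtain ⟨_, ⟨C, hC, rfl⟩, hBC⟩ := h.2 B hB
    refine ⟨C, hC, fun x hx => ?_⟩
    obtain ⟨y, hy, hyx⟩ := hBC hx.2
    rw [hR] at hyx
    have hyA : y ∈ A := hR ▸ Set.mem_sUnion_of_mem hy hC
    exact hinj hyA hx.1 hyx ▸ hy
  refine ⟨Q, ⟨hQU.symm ▸ hfin, ?_, ?_⟩, ⟨hQU.trans hR.symm, ?_⟩, ?_⟩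
  · rintro _ ⟨B, hB, rfl⟩
    obtain ⟨hne, _, hconv⟩ := hs.1.2.1 B hB
    refine ⟨?_, fun x hx => ?_, fun x hx z hz y hxy hyz => ?_⟩
    · rw [← himg B hB] at hne
      exact hne.of_image
    · obtain ⟨D, hD, hxD⟩ := hA hx.1
      exact (hg.1.2.1 D hD).2.1 x hxD
    · obtain ⟨C, hC, hBC⟩ := hsub B hB
      have hyC := restrictIP_convex hg.1 hC (hBC hx) (hBC hz) hxy hyz
      exact ⟨hR ▸ Set.mem_sUnion_of_mem hyC hC, hconv _ hx.2 _ hz.2 _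
        (stdMap_mono hfin hxy) (stdMap_mono hfin hyz)⟩
  · rintro _ ⟨B, hB, rfl⟩ _ ⟨C, hC, rfl⟩ hne
    have hBC : B ∩ C = ∅ := hs.1.2.2 B hB C hC fun h => hne (h ▸ rfl)
    refine Set.eq_empty_of_forall_notMem fun x hx => ?_
    exact Set.notMem_empty (stdMap A x) (hBC ▸ ⟨hx.1.2, hx.2.2⟩)
  · rintro _ ⟨B, hB, rfl⟩
    exact hsub B hB
  · rw [stdIP, hQU, hQ, Set.image_image]
    exact (Set.image_congr himg).trans (Set.image_id' s)

theorem refineTo_spec {P s : Set (Set ℕ)}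
    (h : ∃ Q, IsIntervalPartition Q ∧ IPle Q P ∧ stdIP Q = s) :
    IsIntervalPartition (refineTo P s) ∧ IPle (refineTo P s) P ∧ stdIP (refineTo P s) = s := by
  rw [refineTo, dif_pos h]
  exact h.choose_spec

theorem refineTo_eq {P Q s : Set (Set ℕ)} (hQ : IsIntervalPartition Q) (hle : IPle Q P)
    (hstd : stdIP Q = s) : refineTo P s = Q := by
  obtain ⟨h1, h2, h3⟩ := refineTo_spec ⟨Q, hQ, hle, hstd⟩
  exact stdIP_inj ⟨h1, h2.1⟩ ⟨hQ, hle.1⟩ (h3.trans hstd.symm)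

/-- Membership in `set14` amounts to existence of a pair of partitions gluing to `g`. -/
theorem mem_set14_iff {s t g : Set (Set ℕ)} (hs : IsStdIP s) (ht : IsStdIP t) (hg : IsStdIP g)
    (p : Set ℕ × Set ℕ) :
    p ∈ set14 s t g ↔ p.1 ∪ p.2 = ⋃₀ g ∧
      ∃ I I' : Set (Set ℕ), IsIntervalPartitionOf I p.1 ∧ IsIntervalPartitionOf I' p.2 ∧
        stdIP I = s ∧ stdIP I' = t ∧ glue I I' = g := by
  constructor
  · rintro ⟨hp, h1, h2, hglue⟩
    have hA1 : p.1 ⊆ ⋃₀ g := hp ▸ Set.subset_union_left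
    have hA2 : p.2 ⊆ ⋃₀ g := hp ▸ Set.subset_union_right
    obtain ⟨a1, a2, a3⟩ := refineTo_spec (exists_refinement hs hg hA1 h1)
    obtain ⟨b1, b2, b3⟩ := refineTo_spec (exists_refinement ht hg hA2 h2)
    exact ⟨hp, _, _, ⟨a1, a2.1.trans (sUnion_restrictIP hA1)⟩,
      ⟨b1, b2.1.trans (sUnion_restrictIP hA2)⟩, a3, b3, hglue⟩
  · rintro ⟨hp, I, I', hI, hI', rfl, rfl, hglue⟩
    have l1 : IPle I (restrictIP g p.1) :=
      IPle_restrictIP hI fun X hX => hglue ▸ subset_glue (Or.inl hX)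
    have l2 : IPle I' (restrictIP g p.2) :=
      IPle_restrictIP hI' fun X hX => hglue ▸ subset_glue (Or.inr hX)
    refine ⟨hp, IPle_stdIP l1, IPle_stdIP l2, ?_⟩
    rw [refineTo_eq hI.1 l1 rfl, refineTo_eq hI'.1 l2 rfl, hglue]

/-- recovering the section coefficients. -/
theorem recover_section_coefficients (s t g : Set (Set ℕ))
    (hs : IsStdIP s) (ht : IsStdIP t) (hg : IsStdIP g) :
    (set14 s t g
      = {p : Set ℕ × Set ℕ | p.1 ∪ p.2 = ⋃₀ g ∧
          ∃! q : Set (Set ℕ) × Set (Set ℕ),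
            IsIntervalPartitionOf q.1 p.1 ∧ IsIntervalPartitionOf q.2 p.2 ∧
              stdIP q.1 = s ∧ stdIP q.2 = t ∧ glue q.1 q.2 = g}) ∧
    (set14 s t g).ncard = secCoeff s t g := by
  refine ⟨?_, ?_⟩
  · ext p
    rw [mem_set14_iff hs ht hg]
    refine and_congr_right fun _ => ⟨?_, ?_⟩
    · rintro ⟨I, I', hI, hI', e1, e2, e3⟩
      refine ⟨(I, I'), ⟨hI, hI', e1, e2, e3⟩, ?_⟩
      rintro ⟨J, J'⟩ ⟨hJ, hJ', f1, f2, _⟩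
      exact Prod.ext (stdIP_inj hJ hI (f1.trans e1.symm)) (stdIP_inj hJ' hI' (f2.trans e2.symm))
    · rintro ⟨⟨I, I'⟩, h, _⟩
      exact ⟨I, I', h⟩
  · exact congrArg Set.ncard (Set.ext (mem_set14_iff hs ht hg))
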